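/- Let $a < b$ be real and let $h : [a, b] \to \mathbb{R}$ be continuous. Then the function $F(\lambda) = \int_a^\lambda h(\xi)\sqrt{\lambda - \xi}\,d\xi$ is differentiable on $(a, b]$ with $F'(\lambda) = \frac{1}{2}\int_a^\lambda \frac{h(\xi)}{\sqrt{\lambda - \xi}}\,d\xi$, where the last integral is a convergent improper integral. -/

import Mathlib

open Set MeasureTheory intervalIntegral

/-- The function `x ↦ (√x)⁻¹` (with value `0` at nonpositive reals) is interval integrable. -/
lemma intervalIntegrable_inv_sqrt (a b : ℝ) :
    IntervalIntegrable (fun x : ℝ => (√x)⁻¹) volume a b := by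
  have h : (fun x : ℝ => (√x)⁻¹) = fun x : ℝ => x ^ (-(1 / 2) : ℝ) := by
    funext x
    rw [Real.rpow_neg_eq_inv_rpow, ← Real.sqrt_eq_rpow, Real.sqrt_inv]
  rw [h]
  exact intervalIntegrable_rpow' (by norm_num)

/-- The square root (extended by `0`) satisfies a Lipschitz bound centred at `z ≠ 0`, with
a constant of order `|z| ^ (-1 / 2)`. -/
lemma abs_sqrt_sub_sqrt_le (y : ℝ) {z : ℝ} (hz : z ≠ 0) :
    |√y - √z| ≤ ((√z)⁻¹ + (√(-z))⁻¹) * |y - z| := by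
  rcases hz.lt_or_gt with hz | hz
  · have hs : 0 < √(-z) := Real.sqrt_pos.2 (by linarith)
    rw [Real.sqrt_eq_zero_of_nonpos hz.le, inv_zero, zero_add, sub_zero, ← div_eq_inv_mul,
      le_div_iff₀ hs, abs_of_nonneg (Real.sqrt_nonneg y)]
    rcases le_total y 0 with hy | hy
    · rw [Real.sqrt_eq_zero_of_nonpos hy, zero_mul]
      exact abs_nonneg _
    · refine le_trans ?_ (le_abs_self _)
      nlinarith [Real.sq_sqrt hy, Real.sq_sqrt (neg_nonneg.2 hz.le), sq_nonneg (√y - √(-z))]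
  · have hs : 0 < √z := Real.sqrt_pos.2 hz
    rw [Real.sqrt_eq_zero_of_nonpos (neg_nonpos.2 hz.le), inv_zero, add_zero, ← div_eq_inv_mul,
      le_div_iff₀ hs]
    rcases le_total y 0 with hy | hy
    · rw [Real.sqrt_eq_zero_of_nonpos hy, zero_sub, abs_neg, abs_of_pos hs,
        Real.mul_self_sqrt hz.le, abs_sub_comm]
      exact le_trans (by linarith) (le_abs_self _)
    · have h : y - z = (√y - √z) * (√y + √z) := by
        nlinarith [Real.sq_sqrt hy, Real.sq_sqrt hz.le]
      rw [h, abs_mul, abs_of_nonneg (add_nonneg (Real.sqrt_nonneg y) hs.le)]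
      gcongr
      linarith [Real.sqrt_nonneg y]

/-- Differentiation under the integral sign for `x ↦ ∫ h(t) √(x - t) dt` over a fixed interval,
the square root being extended by `0` to negative reals. -/
lemma hasDerivAt_integral_mul_sqrt_sub {a b : ℝ} {h : ℝ → ℝ} (hc : ContinuousOn h (uIcc a b))
    (hab : a ≤ b) (l : ℝ) :
    IntervalIntegrable (fun t => h t / √(l - t)) volume a b ∧
      HasDerivAt (fun x => ∫ t in a..b, h t * √(x - t))
        ((1 / 2) * ∫ t in a..b, h t / √(l - t)) l := by
  have hleft : IntervalIntegrable (fun t : ℝ => (√(l - t))⁻¹) volume a b := by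
    simpa using (intervalIntegrable_inv_sqrt (l - a) (l - b)).comp_sub_left l
  have hright : IntervalIntegrable (fun t : ℝ => (√(t - l))⁻¹) volume a b := by
    simpa using (intervalIntegrable_inv_sqrt (a - l) (b - l)).comp_sub_right l
  have hquot : IntervalIntegrable (fun t => h t / √(l - t)) volume a b := by
    simpa only [div_eq_mul_inv] using hleft.continuousOn_mul hc
  have hbound : IntervalIntegrable (fun t => |h t| * ((√(l - t))⁻¹ + (√(t - l))⁻¹)) volume a b :=
    (hleft.add hright).continuousOn_mul hc.abs
  have hF (x : ℝ) : IntervalIntegrable (fun t => h t * √(x - t)) volume a b :=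
    (hc.mul (by fun_prop)).intervalIntegrable
  have hne : ∀ᵐ t ∂volume.restrict (Ioc a b), l - t ≠ 0 := by
    filter_upwards [ae_restrict_of_ae (Measure.ae_ne volume l)] with t ht
    exact sub_ne_zero.2 ht.symm
  refine ⟨hquot, ?_⟩
  rw [intervalIntegrable_iff_integrableOn_Ioc_of_le hab] at hquot hbound
  have hquot' : IntegrableOn (fun t => h t * (1 / (2 * √(l - t)))) (Ioc a b) := by
    refine (hquot.const_mul (1 / 2)).congr (ae_of_all _ fun t => ?_)
    simp only [div_eq_mul_inv, mul_inv]
    ring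
  obtain ⟨hi, hd⟩ := hasFDerivAt_integral_of_dominated_loc_of_lip' (𝕜 := ℝ)
    (μ := volume.restrict (Ioc a b)) (F := fun x t => h t * √(x - t))
    (F' := fun t => ContinuousLinearMap.toSpanSingleton ℝ (h t * (1 / (2 * √(l - t)))))
    (x₀ := l) (s := univ) Filter.univ_mem
    (fun x _ => ((intervalIntegrable_iff_integrableOn_Ioc_of_le hab).1
      (hF x)).aestronglyMeasurable)
    ((intervalIntegrable_iff_integrableOn_Ioc_of_le hab).1 (hF l))
    ((ContinuousLinearMap.toSpanSingletonCLE (𝕜 := ℝ) (E := ℝ)).continuous.comp_aestronglyMeasurable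
      hquot'.aestronglyMeasurable)
    (by
      filter_upwards [hne] with t ht x _
      have key := abs_sqrt_sub_sqrt_le (x - t) ht
      rw [neg_sub, sub_sub_sub_cancel_right] at key
      rw [← mul_sub, norm_mul, Real.norm_eq_abs, Real.norm_eq_abs, Real.norm_eq_abs, mul_assoc]
      gcongr)
    hbound
    (by
      filter_upwards [hne] with t ht
      have key := (Real.hasDerivAt_sqrt ht).comp_sub_const l t
      exact (key.const_mul (h t)).hasFDerivAt)
  have hd' := hd.hasDerivAt
  rw [ContinuousLinearMap.integral_apply hi] at hd'
  simp only [integral_of_le hab]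
  refine hd'.congr_deriv ?_
  rw [← MeasureTheory.integral_const_mul]
  congr 1 with t
  simp only [ContinuousLinearMap.toSpanSingleton_apply, one_smul, div_eq_mul_inv, mul_inv]
  ring

/-- An integral over `[a, b]` of a function vanishing beyond `l ∈ [a, b]` reduces to `[a, l]`. -/
lemma integral_eq_of_eq_zero_of_le {a b l : ℝ} {f : ℝ → ℝ} (hl : l ∈ Icc a b)
    (hf : IntervalIntegrable f volume a b) (h0 : ∀ t, l ≤ t → f t = 0) :
    ∫ t in a..l, f t = ∫ t in a..b, f t := by
  have hmem : l ∈ uIcc a b := Icc_subset_uIcc hl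
  rw [← integral_add_adjacent_intervals (b := l)
    (hf.mono_set (uIcc_subset_uIcc_left hmem)) (hf.mono_set (uIcc_subset_uIcc_right hmem)),
    left_eq_add]
  refine integral_zero_ae (ae_of_all _ fun t ht => h0 t ?_)
  rw [uIoc_of_le hl.2] at ht
  exact ht.1.le


/-- Abel-type differentiation identity: `F(λ) = ∫_a^λ h(ξ)√(λ-ξ) dξ` is differentiable
on `(a, b]` with `F'(λ) = ½ ∫_a^λ h(ξ)/√(λ-ξ) dξ`, the last integral being a convergent
improper integral. -/
theorem stmt5 (a b : ℝ) (hab : a < b) (h : ℝ → ℝ) (hc : ContinuousOn h (Set.Icc a b))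
    (F : ℝ → ℝ) (hF : ∀ l, F l = ∫ ξ in a..l, h ξ * Real.sqrt (l - ξ)) :
    ∀ l ∈ Set.Ioc a b,
      IntervalIntegrable (fun ξ => h ξ / Real.sqrt (l - ξ)) volume a l ∧
      HasDerivWithinAt F ((1 / 2) * ∫ ξ in a..l, h ξ / Real.sqrt (l - ξ)) (Set.Iic b) l := by
  intro l hl
  have hc' : ContinuousOn h (uIcc a b) := by rwa [uIcc_of_le hab.le]
  obtain ⟨hquot, hd⟩ := hasDerivAt_integral_mul_sqrt_sub hc' hab.le l
  have hzero (x t : ℝ) (hxt : x ≤ t) : √(x - t) = 0 :=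
    Real.sqrt_eq_zero_of_nonpos (sub_nonpos.2 hxt)
  have hFeq : ∀ x ∈ Ioc a b, F x = ∫ t in a..b, h t * √(x - t) := by
    intro x hx
    rw [hF]
    exact integral_eq_of_eq_zero_of_le (Ioc_subset_Icc_self hx)
      (hc'.mul (by fun_prop)).intervalIntegrable (fun t ht => by rw [hzero x t ht, mul_zero])
  refine ⟨hquot.mono_set (uIcc_subset_uIcc_left (Icc_subset_uIcc (Ioc_subset_Icc_self hl))), ?_⟩
  rw [integral_eq_of_eq_zero_of_le (Ioc_subset_Icc_self hl) hquot
    (fun t ht => by rw [hzero l t ht, div_zero])]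
  refine hd.hasDerivWithinAt.congr_of_eventuallyEq ?_ (hFeq l hl)
  filter_upwards [self_mem_nhdsWithin, mem_nhdsWithin_of_mem_nhds (Ioi_mem_nhds hl.1)]
    with x hxb hxa
  exact hFeq x ⟨hxa, hxb⟩
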